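/- The square of the non-incidence matrix B satisfies B² = Φ(N, q^{n-1}, q^{n-2}(q-1)): the diagonal entries of B² equal q^{n-1} and all off-diagonal entries equal q^{n-2}(q-1). -/

import Mathlib

lemma count_aux {F : Type*} [Field F] [Fintype F] [DecidableEq F] {m n : ℕ}
    (M : Matrix (Fin m) (Fin n) F) (hM : LinearIndependent F M.row) :
    (Finset.univ.filter (fun w : Fin n → F => ∀ a, M.mulVec w a ≠ 0)).card * Fintype.card F ^ m
      = (Fintype.card F - 1) ^ m * Fintype.card F ^ n := by
  classical
  have hsurj : Function.Surjective M.mulVecLin := by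
    rw [← LinearMap.range_eq_top]
    apply Submodule.eq_top_of_finrank_eq
    have h := hM.rank_matrix
    rw [Matrix.rank] at h
    rw [h]; simp
  have hfib : ∀ y : Fin m → F, (Finset.univ.filter (fun w : Fin n → F => M.mulVecLin w = y)).card
      = (Finset.univ.filter (fun w : Fin n → F => M.mulVecLin w = 0)).card := by
    intro y
    exact AddMonoidHom.card_fiber_eq_of_mem_range M.mulVecLin.toAddMonoidHom (hsurj y) (hsurj 0)
  set c := (Finset.univ.filter (fun w : Fin n → F => M.mulVecLin w = 0)).card with hc
  have key : ∀ T : Finset (Fin m → F),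
      (Finset.univ.filter (fun w : Fin n → F => M.mulVecLin w ∈ T)).card = T.card * c := by
    intro T
    rw [Finset.card_eq_sum_card_fiberwise (f := M.mulVecLin) (t := T)
      (by intro w hw; exact (Finset.mem_filter.1 (Finset.mem_coe.1 hw)).2)]
    rw [Finset.sum_const_nat (m := c)]
    intro y hy
    rw [← hfib y, Finset.filter_filter]
    congr 1
    ext w
    simp only [Finset.mem_filter, Finset.mem_univ, true_and]
    constructor
    · exact fun h => h.2
    · intro h; exact ⟨h ▸ hy, h⟩
  have h1 := key Finset.univ
  have h2 := key (Fintype.piFinset (fun _ => Finset.univ.filter (fun x : F => x ≠ 0)))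
  have h3 : (Finset.univ.filter (fun x : F => x ≠ 0)).card = Fintype.card F - 1 := by
    rw [Finset.filter_ne' , Finset.card_erase_of_mem (Finset.mem_univ _), Finset.card_univ]
  simp only [Fintype.card_piFinset, h3, Fintype.mem_piFinset, Finset.mem_filter, Finset.mem_univ,
    true_and, Matrix.mulVecLin_apply, Finset.prod_const, Finset.card_univ, Fintype.card_fin] at h2
  simp only [Finset.mem_univ, Finset.filter_true, Finset.card_univ, Fintype.card_fun,
    Fintype.card_fin] at h1
  rw [h2, h1]; ring

theorem nonincidence_sq (q n N : ℕ) (hq : 2 ≤ q) (hn : 2 ≤ n)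
    (F : Type*) [Field F] [Fintype F] [DecidableEq F] (hF : Fintype.card F = q)
    (hN : N = (q ^ n - 1) / (q - 1))
    (v : Fin N → (Fin n → F))
    (hv0 : ∀ i, v i ≠ 0)
    (hvinj : ∀ i j, Submodule.span F {v i} = Submodule.span F {v j} → i = j)
    (hvcov : ∀ w : Fin n → F, w ≠ 0 → ∃ i, w ∈ Submodule.span F {v i})
    (A : Matrix (Fin N) (Fin N) ℤ)
    (hA : ∀ i j, A i j = if ∑ k, v i k * v j k = 0 then 1 else 0)
    (B : Matrix (Fin N) (Fin N) ℤ) (hB : ∀ i j, B i j = 1 - A i j):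
    ∀ i j : Fin N, (B * B) i j = if i = j then ((q ^ (n - 1) : ℕ) : ℤ) else ((q ^ (n - 2) * (q - 1) : ℕ) : ℤ) := by
  classical
  intro i j
  set K := Finset.univ.filter (fun k : Fin N => v i ⬝ᵥ v k ≠ 0 ∧ v j ⬝ᵥ v k ≠ 0) with hK
  have hBB : (B * B) i j = (K.card : ℤ) := by
    rw [Matrix.mul_apply, hK, Finset.card_filter]
    push_cast
    refine Finset.sum_congr rfl fun k _ => ?_
    have e1 : ∑ l, v i l * v k l = v i ⬝ᵥ v k := rfl
    have e2 : ∑ l, v k l * v j l = v j ⬝ᵥ v k := dotProduct_comm (v k) (v j)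
    rw [hB, hB, hA, hA, e1, e2]
    by_cases h1 : v i ⬝ᵥ v k = 0 <;> by_cases h2 : v j ⬝ᵥ v k = 0 <;> simp [h1, h2]
  set S := Finset.univ.filter (fun w : Fin n → F => v i ⬝ᵥ w ≠ 0 ∧ v j ⬝ᵥ w ≠ 0) with hS
  have hcard : S.card = (q - 1) * K.card := by
    have : (q - 1) * K.card = ((Finset.univ : Finset Fˣ) ×ˢ K).card := by
      rw [Finset.card_product, Finset.card_univ, Fintype.card_units, hF]
    rw [this]
    symm
    apply Finset.card_bij (fun p _ => (p.1 : F) • v p.2)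
    · rintro ⟨a, k⟩ h
      simpa [hS, hK] using h
    · rintro ⟨a, k⟩ h ⟨b, l⟩ h' heq
      simp only at heq
      have hkl : k = l := by
        apply hvinj
        rw [← Submodule.span_singleton_smul_eq a.isUnit (v k), heq,
          Submodule.span_singleton_smul_eq b.isUnit (v l)]
      subst hkl
      have := smul_left_injective F (hv0 k) heq
      rw [Units.ext this]
    · intro w hw
      simp only [hS, Finset.mem_filter, Finset.mem_univ, true_and] at hw
      have hw0 : w ≠ 0 := by rintro rfl; simp at hw
      obtain ⟨k, hk⟩ := hvcov w hw0
      obtain ⟨a, rfl⟩ := Submodule.mem_span_singleton.1 hk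
      have ha : a ≠ 0 := by rintro rfl; simp at hw0
      refine ⟨(Units.mk0 a ha, k), ?_, rfl⟩
      simpa [hK, ha] using hw
  have hq1 : 0 < q - 1 := by omega
  rw [hBB]
  split_ifs with hij
  · subst hij
    have hli : LinearIndependent F (Matrix.of ![v i]).row := by
      have : LinearIndependent F ![v i] := by
        rw [linearIndependent_unique_iff]; exact hv0 i
      exact this
    have h := count_aux _ hli
    have e : (Finset.univ.filter (fun w : Fin n → F => ∀ a, (Matrix.of ![v i]).mulVec w a ≠ 0)) = S := by
      ext w; simp [hS, Matrix.mulVec]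
    rw [e, hF, hcard] at h
    norm_cast
    obtain ⟨t, rfl⟩ : ∃ t, n = t + 1 := ⟨n - 1, by omega⟩
    have hp : 0 < (q - 1) * q := by positivity
    apply Nat.eq_of_mul_eq_mul_left hp
    simp only [Nat.add_sub_cancel]
    rw [pow_succ q t] at h
    linarith
  · have hli : LinearIndependent F (Matrix.of ![v i, v j]).row := by
      have : LinearIndependent F ![v i, v j] := by
        rw [LinearIndependent.pair_iff' (hv0 i)]
        intro a ha
        have ha0 : a ≠ 0 := by rintro rfl; exact hv0 j (by simpa using ha.symm)
        apply hij
        apply hvinj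
        rw [← ha, Submodule.span_singleton_smul_eq (IsUnit.mk0 a ha0)]
      exact this
    have h := count_aux _ hli
    have e : (Finset.univ.filter (fun w : Fin n → F => ∀ a, (Matrix.of ![v i, v j]).mulVec w a ≠ 0)) = S := by
      ext w; simp [hS, Matrix.mulVec, Fin.forall_fin_two]
    rw [e, hF, hcard] at h
    norm_cast
    obtain ⟨t, rfl⟩ : ∃ t, n = t + 2 := ⟨n - 2, by omega⟩
    have hp : 0 < (q - 1) * q ^ 2 := by positivity
    apply Nat.eq_of_mul_eq_mul_left hp
    simp only [Nat.add_sub_cancel]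
    rw [pow_add q t] at h
    linarith
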